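/- The generating function G(x) = x⁴/(1−x) of 1-core trees satisfies: the number of unrooted trees on n ≥ 4 points of a circle with exactly one crossing in which every leaf-edge participates in the crossing structure as a 1-core equals 1 for every n ≥ 4; equivalently, for each n ≥ 4 there is, up to rotation, exactly one 1-core tree on n vertices. -/

import Mathlib

/-- Two chords `(p.1, p.2)` and `(q.1, q.2)` of a circle with vertices labeled
`0, 1, …, n-1` in circular order interleave, i.e. cross, when
`p.1 < q.1 < p.2 < q.2`. -/
def Interleaves {n : ℕ} (p q : Fin n × Fin n) : Prop :=
  p.1 < q.1 ∧ q.1 < p.2 ∧ p.2 < q.2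

instance {n : ℕ} (p q : Fin n × Fin n) : Decidable (Interleaves p q) :=
  inferInstanceAs (Decidable (_ ∧ _ ∧ _))

/-- The number of crossings of a set of chords (each chord recorded with its
endpoints in increasing order): the number of unordered pairs of chords whose
endpoints interleave around the circle. -/
def crossNum {n : ℕ} (D : Finset (Fin n × Fin n)) : ℕ :=
  ((D ×ˢ D).filter fun pq => Interleaves pq.1 pq.2).card

/-- Two chords cross when their endpoints interleave, in either order. -/
def CrossRel {n : ℕ} (p q : Fin n × Fin n) : Prop :=
  Interleaves p q ∨ Interleaves q p

/-- A chord diagram: each chord recorded with its endpoints in increasing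
order. -/
def IsDiagram {n : ℕ} (D : Finset (Fin n × Fin n)) : Prop :=
  ∀ p ∈ D, p.1 < p.2

/-- The graph on the `n` points of the circle whose edges are the chords of the
diagram `D`. -/
def diagGraph {n : ℕ} (D : Finset (Fin n × Fin n)) : SimpleGraph (Fin n) :=
  SimpleGraph.fromRel (fun a b => (a, b) ∈ D)

/-- The degree of the vertex `v` in the chord diagram `D`. -/
def degreeAt {n : ℕ} (D : Finset (Fin n × Fin n)) (v : Fin n) : ℕ :=
  (D.filter fun p => p.1 = v ∨ p.2 = v).card

/-- A `1`-core tree: a tree on points of a circle with exactly one crossing in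
which every chord incident to a leaf is involved in a crossing. -/
def IsOneCoreTree {n : ℕ} (D : Finset (Fin n × Fin n)) : Prop :=
  IsDiagram D ∧ (diagGraph D).IsTree ∧ crossNum D = 1 ∧
    ∀ p ∈ D, (degreeAt D p.1 = 1 ∨ degreeAt D p.2 = 1) → ∃ q ∈ D, CrossRel p q

/-- The rotation by `c` of a (normalized) chord: rotate both endpoints and
normalize. -/
def rotPair {n : ℕ} (c : Fin n) (p : Fin n × Fin n) : Fin n × Fin n :=
  if p.1 + c ≤ p.2 + c then (p.1 + c, p.2 + c) else (p.2 + c, p.1 + c)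

/-!
Call the four endpoints of the two crossing chords crossing points. A chord crossed by no other one
cuts off an open arc without crossing points. Were this arc non-empty, its vertex farthest from the
chord in the tree would be a leaf, but leaves are crossing points; so the chord is a side of the
polygon. A point that is not a crossing point is therefore joined to both of its circular
neighbours, and a tree with `n - 1` edges, two of which cross, misses exactly three sides. A missing
side joins two crossing points, so the crossing points are consecutive, say `t`, `t + 1`,
`t + 2`, `t + 3`, and the tree is determined by `t`: it is the path
`t + 1, t + 3, t + 4, …, t, t + 2`.
-/

section Tree

variable {V : Type*} {G : SimpleGraph V}

theorem eq_of_isTree_of_adj_of_dist_le (hG : G.IsTree) {r v w w' : V} (hw : G.Adj v w)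
    (hw' : G.Adj v w') (hle : G.dist r w ≤ G.dist r v) (hle' : G.dist r w' ≤ G.dist r v) :
    w = w' := by
  obtain ⟨p, hp, hlen⟩ := hG.connected.exists_path_of_dist r v
  have eq_penultimate : ∀ z, G.Adj v z → G.dist r z ≤ G.dist r v → z = p.penultimate := by
    intro z hz hzle
    refine hG.isAcyclic.eq_penultimate_of_adj_end hp hz ?_
    by_contra hsupp
    obtain ⟨q, hq, hqlen⟩ := hG.connected.exists_path_of_dist r z
    have hqp := (hG.existsUnique_path r z).unique hq (hp.concat hsupp hz)
    rw [hqp, SimpleGraph.Walk.length_concat] at hqlen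
    omega
  rw [eq_penultimate w hw hle, eq_penultimate w' hw' hle']

/-- A vertex of `S` at maximal distance from `x` has no neighbour further away from `x`, and in a
tree it has only one neighbour that is closer. -/
theorem exists_mem_subsingleton_neighborSet_of_isTree (hG : G.IsTree) {x y : V} (hxy : G.Adj x y)
    {S : Set V} (hfin : S.Finite) (hne : S.Nonempty) (hx : x ∉ S)
    (hS : ∀ v ∈ S, ∀ w, G.Adj v w → w ∈ S ∨ w = x ∨ w = y) :
    ∃ v ∈ S, (G.neighborSet v).Subsingleton := by
  obtain ⟨v, hv, hmax⟩ := Set.exists_max_image S (G.dist x) hfin hne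
  have hpos : 0 < G.dist x v := hG.connected.pos_dist_of_ne (ne_of_mem_of_not_mem hv hx).symm
  have hle : ∀ w, G.Adj v w → G.dist x w ≤ G.dist x v := by
    intro w hw
    rcases hS v hv w hw with hwS | rfl | rfl
    · exact hmax w hwS
    · simp
    · rwa [SimpleGraph.dist_eq_one_iff_adj.2 hxy]
  exact ⟨v, hv, fun w hw w' hw' => eq_of_isTree_of_adj_of_dist_le hG hw hw' (hle w hw) (hle w' hw')⟩

theorem isTree_pathGraph (n : ℕ) : (SimpleGraph.pathGraph (n + 1)).IsTree := by
  refine SimpleGraph.isTree_iff_connected_and_card.2 ⟨SimpleGraph.pathGraph_connected n, ?_⟩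
  have hedges : (SimpleGraph.pathGraph (n + 1)).edgeSet =
      Set.range fun i : Fin n => s(i.castSucc, i.succ) := by
    ext e
    induction e with | _ u v
    simp only [SimpleGraph.mem_edgeSet, SimpleGraph.pathGraph_adj, Set.mem_range, Sym2.eq_iff,
      Fin.ext_iff, Fin.val_castSucc, Fin.val_succ]
    constructor
    · rintro (h | h)
      · exact ⟨⟨u, by omega⟩, by simp [h]⟩
      · exact ⟨⟨v, by omega⟩, by simp [h]⟩
    · rintro ⟨i, hi⟩
      omega
  rw [hedges, Nat.card_range_of_injective, Nat.card_fin, Nat.card_fin]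
  intro i j hij
  simp only [Sym2.eq_iff, Fin.ext_iff, Fin.val_castSucc, Fin.val_succ] at hij
  omega

end Tree

section Chords

variable {n : ℕ} {D : Finset (Fin n × Fin n)}

open Classical in
/-- The chord diagram of a graph on the points of the circle, inverse to `diagGraph`. -/
noncomputable def chords (G : SimpleGraph (Fin n)) : Finset (Fin n × Fin n) :=
  {p | p.1 < p.2 ∧ G.Adj p.1 p.2}

theorem mem_chords {G : SimpleGraph (Fin n)} {p : Fin n × Fin n} :
    p ∈ chords G ↔ p.1 < p.2 ∧ G.Adj p.1 p.2 := by
  simp [chords]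

theorem isDiagram_chords (G : SimpleGraph (Fin n)) : IsDiagram (chords G) :=
  fun _ hp => (mem_chords.1 hp).1

theorem diagGraph_adj {u v : Fin n} :
    (diagGraph D).Adj u v ↔ u ≠ v ∧ ((u, v) ∈ D ∨ (v, u) ∈ D) :=
  SimpleGraph.fromRel_adj _ _ _

theorem diagGraph_adj_of_mem (hD : IsDiagram D) {p : Fin n × Fin n} (hp : p ∈ D) :
    (diagGraph D).Adj p.1 p.2 :=
  diagGraph_adj.2 ⟨(hD p hp).ne, Or.inl hp⟩

theorem exists_mem_of_diagGraph_adj {u v : Fin n} (huv : (diagGraph D).Adj u v) :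
    ∃ p ∈ D, s(p.1, p.2) = s(u, v) := by
  rcases (diagGraph_adj.1 huv).2 with h | h
  · exact ⟨_, h, rfl⟩
  · exact ⟨_, h, Sym2.eq_swap⟩

theorem diagGraph_chords (G : SimpleGraph (Fin n)) : diagGraph (chords G) = G := by
  ext u v
  rw [diagGraph_adj, mem_chords, mem_chords, G.adj_comm v u, ← or_and_right, ← ne_iff_lt_or_gt,
    ← and_assoc, and_self]
  exact and_iff_right_of_imp SimpleGraph.Adj.ne

theorem chords_diagGraph (hD : IsDiagram D) : chords (diagGraph D) = D := by
  ext ⟨u, v⟩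
  rw [mem_chords]
  refine ⟨fun ⟨hlt, hadj⟩ => ?_, fun h => ⟨hD _ h, diagGraph_adj_of_mem hD h⟩⟩
  exact (diagGraph_adj.1 hadj).2.resolve_right fun h => hlt.asymm (hD _ h)

theorem degreeAt_eq_ncard_neighborSet (hD : IsDiagram D) (v : Fin n) :
    degreeAt D v = ((diagGraph D).neighborSet v).ncard := by
  rw [degreeAt, ← Set.ncard_coe_finset]
  refine Set.ncard_congr (fun p _ => if p.1 = v then p.2 else p.1) ?_ ?_ ?_
  · rintro ⟨x, y⟩ hp
    have := hD (x, y)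
    simp only [SimpleGraph.mem_neighborSet, diagGraph_adj]
    grind
  · rintro ⟨x, y⟩ ⟨x', y'⟩ hp hp' heq
    have := hD (x, y)
    have := hD (x', y')
    grind
  · intro w hw
    obtain ⟨hne, h | h⟩ := diagGraph_adj.1 hw
    · exact ⟨(v, w), by simp [h], if_pos rfl⟩
    · exact ⟨(w, v), by simp [h], if_neg hne.symm⟩

theorem chords_eq_image_rotPair [NeZero n] (G : SimpleGraph (Fin n)) (c : Fin n) :
    chords G = (chords (G.comap (· + c))).image (rotPair c) := by
  ext ⟨u, v⟩
  obtain ⟨u, rfl⟩ := add_right_surjective c u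
  obtain ⟨v, rfl⟩ := add_right_surjective c v
  rw [Finset.mem_image, mem_chords]
  constructor
  · rintro ⟨hlt, hadj⟩
    rcases (ne_of_apply_ne (· + c) hlt.ne).lt_or_gt with huv | hvu
    · exact ⟨(u, v), mem_chords.2 ⟨huv, hadj⟩, if_pos hlt.le⟩
    · exact ⟨(v, u), mem_chords.2 ⟨hvu, hadj.symm⟩, if_neg hlt.not_ge⟩
  · rintro ⟨⟨x, y⟩, hxy, heq⟩
    have hadj : G.Adj (x + c) (y + c) := (mem_chords.1 hxy).2
    rw [← heq, rotPair]
    split_ifs with hle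
    · exact ⟨hle.lt_of_ne hadj.ne, hadj⟩
    · exact ⟨not_le.1 hle, hadj.symm⟩

theorem crossRel_of_sbtw {u v w z : Fin n} (hv : sbtw u v w) (hz : sbtw w z u)
    {p q : Fin n × Fin n} (hp : p.1 < p.2) (hq : q.1 < q.2) (hpuw : s(p.1, p.2) = s(u, w))
    (hqvz : s(q.1, q.2) = s(v, z)) : CrossRel p q := by
  simp only [Sym2.eq_iff, Fin.sbtw_iff, CrossRel, Interleaves] at *
  omega

theorem exists_crossing_of_crossNum_eq_one (h : crossNum D = 1) :
    ∃ p ∈ D, ∃ q ∈ D, Interleaves p q ∧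
      ∀ p' ∈ D, ∀ q' ∈ D, Interleaves p' q' → p' = p ∧ q' = q := by
  obtain ⟨⟨p, q⟩, hpq⟩ := Finset.card_eq_one.1 h
  have hiff : ∀ p' q', (p' ∈ D ∧ q' ∈ D) ∧ Interleaves p' q' ↔ p' = p ∧ q' = q := fun p' q' => by
    simpa using Finset.ext_iff.1 hpq (p', q')
  obtain ⟨⟨hp, hq⟩, hcross⟩ := (hiff p q).2 ⟨rfl, rfl⟩
  exact ⟨p, hp, q, hq, hcross, fun p' hp' q' hq' h' => (hiff p' q').1 ⟨⟨hp', hq'⟩, h'⟩⟩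

end Chords

section Sides

variable {n : ℕ} [NeZero n]

theorem val_add_one_eq_ite (i : Fin n) :
    ((i + 1 : Fin n) : ℕ) = if (i : ℕ) + 1 = n then 0 else (i : ℕ) + 1 := by
  obtain _ | n := n
  · exact i.elim0
  · simp [Fin.val_add_one, Fin.ext_iff]

theorem eq_add_one_of_cIoo_eq_empty {x y : Fin n} (hne : x ≠ y) (h : Set.cIoo x y = ∅) :
    y = x + 1 := by
  have hsucc : ¬ sbtw x (x + 1) y := fun hmem => (h ▸ Set.mem_cIoo.2 hmem : x + 1 ∈ (∅ : Set _))
  have hval := val_add_one_eq_ite x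
  simp only [Fin.sbtw_iff, Fin.lt_def, Fin.ext_iff, ne_eq] at *
  split_ifs at hval <;> omega

theorem not_sbtw_add_one (x v : Fin n) : ¬ sbtw x v (x + 1) := by
  have hval := val_add_one_eq_ite x
  simp only [Fin.sbtw_iff, Fin.lt_def]
  split_ifs at hval <;> omega

/-- The side of the polygon from the point `i` to the next one. -/
def side (i : Fin n) : Sym2 (Fin n) := s(i, i + 1)

theorem side_injective (hn : 3 ≤ n) : Function.Injective (side (n := n)) := by
  intro i j hij
  have hi := val_add_one_eq_ite i
  have hj := val_add_one_eq_ite j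
  simp only [side, Sym2.eq_iff, Fin.ext_iff] at *
  split_ifs at hi hj <;> omega

theorem ne_side_of_sbtw {u v w z : Fin n} (hv : sbtw u v w) (hz : sbtw w z u) (i : Fin n) :
    s(u, w) ≠ side i := by
  intro h
  rcases Sym2.eq_iff.1 h with ⟨rfl, rfl⟩ | ⟨rfl, rfl⟩
  · exact not_sbtw_add_one _ _ hv
  · exact not_sbtw_add_one _ _ hz

/-- The tree with the crossing chords from `t` to `t + 2` and from `t + 1` to `t + 3`, and all sides
of the polygon but the three between these four points. -/
def pathLikeGraph (t : Fin n) : SimpleGraph (Fin n) :=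
  SimpleGraph.fromEdgeSet
    ({s(t, t + 1 + 1), s(t + 1, t + 1 + 1 + 1)} ∪ side '' {t, t + 1, t + 1 + 1}ᶜ)

theorem comap_add_right_pathLikeGraph (t c : Fin n) :
    (pathLikeGraph (t + c)).comap (· + c) = pathLikeGraph t := by
  have hchord : ∀ {u v x y : Fin n}, s(u + c, v + c) = s(x + c, y + c) ↔ s(u, v) = s(x, y) := by
    simp
  ext u v
  have hside : s(u + c, v + c) ∈ side '' {t + c, t + 1 + c, t + 1 + 1 + c}ᶜ ↔
      s(u, v) ∈ side '' {t, t + 1, t + 1 + 1}ᶜ := by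
    rw [Set.mem_image, ← (Equiv.addRight c).exists_congr_right]
    simp only [Equiv.coe_addRight, side, add_right_comm _ c 1, hchord, Set.mem_image,
      Set.mem_compl_iff, Set.mem_insert_iff, Set.mem_singleton_iff, add_left_inj]
  simp only [pathLikeGraph, SimpleGraph.comap_adj, SimpleGraph.fromEdgeSet_adj, Set.mem_union,
    add_right_comm _ c 1, hside, Set.mem_insert_iff, Set.mem_singleton_iff, hchord, ne_eq,
    add_left_inj]

theorem chords_pathLikeGraph_eq_image_rotPair (t₁ t₂ : Fin n) :
    chords (pathLikeGraph t₂) = (chords (pathLikeGraph t₁)).image (rotPair (t₂ - t₁)) := by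
  rw [chords_eq_image_rotPair (pathLikeGraph t₂) (t₂ - t₁),
    ← comap_add_right_pathLikeGraph t₁ (t₂ - t₁), add_sub_cancel]

end Sides

/-- The graph `G` is a tree whose only crossing is that of the chords `ac` and `bd`, where `a`, `b`,
`c`, `d` follow each other around the circle, and whose leaves are among these four points. Unlike
`IsOneCoreTree`, which cuts the circle at `0`, this is invariant under cyclic shifts of
`a`, `b`, `c`, `d`. -/
structure IsOneCoreGraph {n : ℕ} (G : SimpleGraph (Fin n)) (a b c d : Fin n) : Prop where
  isTree : G.IsTree
  sbtw_abc : sbtw a b c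
  sbtw_cda : sbtw c d a
  adj_ac : G.Adj a c
  adj_bd : G.Adj b d
  eq_or_eq_of_sbtw : ∀ u v w z, sbtw u v w → sbtw w z u → G.Adj u w → G.Adj v z →
    s(u, w) = s(a, c) ∨ s(u, w) = s(b, d)
  nontrivial_neighborSet : ∀ v, v ∉ ({a, b, c, d} : Set (Fin n)) → (G.neighborSet v).Nontrivial

theorem IsOneCoreTree.exists_isOneCoreGraph {n : ℕ} {D : Finset (Fin n × Fin n)}
    (h : IsOneCoreTree D) : ∃ a b c d, IsOneCoreGraph (diagGraph D) a b c d := by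
  obtain ⟨hD, htree, hcross, hleaf⟩ := h
  obtain ⟨⟨a, c⟩, hac, ⟨b, d⟩, hbd, ⟨hab, hbc, hcd⟩, huniq⟩ :=
    exists_crossing_of_crossNum_eq_one hcross
  have eq_or_eq_of_crossRel : ∀ p ∈ D, ∀ q ∈ D, CrossRel p q → p = (a, c) ∨ p = (b, d) := by
    rintro p hp q hq (hpq | hqp)
    · exact Or.inl (huniq p hp q hq hpq).1
    · exact Or.inr (huniq q hq p hp hqp).2
  refine ⟨a, b, c, d, htree, Or.inl ⟨hab, hbc⟩, Or.inr (Or.inr ⟨hab.trans hbc, hcd⟩),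
    diagGraph_adj_of_mem hD hac, diagGraph_adj_of_mem hD hbd, ?_, ?_⟩
  · intro u v w z hv hz huw hvz
    obtain ⟨p, hp, hpuw⟩ := exists_mem_of_diagGraph_adj huw
    obtain ⟨q, hq, hqvz⟩ := exists_mem_of_diagGraph_adj hvz
    have hpq := crossRel_of_sbtw hv hz (hD p hp) (hD q hq) hpuw hqvz
    rw [← hpuw]
    rcases eq_or_eq_of_crossRel p hp q hq hpq with rfl | rfl
    · exact Or.inl rfl
    · exact Or.inr rfl
  · intro v hv
    have : Nontrivial (Fin n) := ⟨a, b, hab.ne⟩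
    obtain ⟨w, hw⟩ := htree.connected.preconnected.exists_adj_of_nontrivial v
    rw [← Set.not_subsingleton_iff]
    intro hsub
    have hdeg : degreeAt D v = 1 := by
      rw [degreeAt_eq_ncard_neighborSet hD, Set.ncard_eq_one]
      exact ⟨w, hsub.eq_singleton_of_mem hw⟩
    obtain ⟨p, hp, hpvw⟩ := exists_mem_of_diagGraph_adj hw
    obtain ⟨q, hq, hpq⟩ := hleaf p hp (by grind)
    have := eq_or_eq_of_crossRel p hp q hq hpq
    grind

namespace IsOneCoreGraph

variable {n : ℕ} {G : SimpleGraph (Fin n)} {a b c d : Fin n}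

theorem rotate (h : IsOneCoreGraph G a b c d) : IsOneCoreGraph G b c d a where
  isTree := h.isTree
  sbtw_abc := by
    have := h.sbtw_abc
    have := h.sbtw_cda
    simp only [Fin.sbtw_iff] at *
    omega
  sbtw_cda := by
    have := h.sbtw_abc
    have := h.sbtw_cda
    simp only [Fin.sbtw_iff] at *
    omega
  adj_ac := h.adj_bd
  adj_bd := h.adj_ac.symm
  eq_or_eq_of_sbtw u v w z hv hz huw hvz := by
    rw [Sym2.eq_swap (a := c)]
    exact (h.eq_or_eq_of_sbtw u v w z hv hz huw hvz).symm
  nontrivial_neighborSet v hv := h.nontrivial_neighborSet v (by grind)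

theorem mem_cIoo_or_eq_or_eq (h : IsOneCoreGraph G a b c d) {x y v z : Fin n} (hxy : G.Adj x y)
    (hac : s(x, y) ≠ s(a, c)) (hbd : s(x, y) ≠ s(b, d)) (hv : v ∈ Set.cIoo x y)
    (hvz : G.Adj v z) : z ∈ Set.cIoo x y ∨ z = x ∨ z = y := by
  by_contra! hz
  have hzyx : sbtw y z x := by
    have := hxy.ne
    simp only [Set.mem_cIoo, Fin.sbtw_iff] at *
    omega
  exact (h.eq_or_eq_of_sbtw x v y z hv hzyx hxy hvz).elim hac hbd

theorem disjoint_cIoo_of_mem (h : IsOneCoreGraph G a b c d) {x y : Fin n} (hxy : G.Adj x y)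
    (hac : s(x, y) ≠ s(a, c)) (hbd : s(x, y) ≠ s(b, d)) (ha : a ∈ Set.cIoo x y) :
    Disjoint (Set.cIoo y x) {a, b, c, d} := by
  have hc := h.mem_cIoo_or_eq_or_eq hxy hac hbd ha h.adj_ac
  rw [Sym2.eq_swap] at hac hbd
  have hd := h.mem_cIoo_or_eq_or_eq hxy.symm hac hbd (v := b) (hvz := h.adj_bd)
  have hb := h.mem_cIoo_or_eq_or_eq hxy.symm hac hbd (v := d) (hvz := h.adj_bd.symm)
  have habc := h.sbtw_abc
  have hcda := h.sbtw_cda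
  simp only [Set.disjoint_insert_right, Set.disjoint_singleton_right, Set.mem_cIoo,
    Fin.sbtw_iff] at *
  omega

theorem disjoint_cIoo_or (h : IsOneCoreGraph G a b c d) {x y : Fin n} (hxy : G.Adj x y)
    (hac : s(x, y) ≠ s(a, c)) (hbd : s(x, y) ≠ s(b, d)) :
    Disjoint (Set.cIoo x y) {a, b, c, d} ∨ Disjoint (Set.cIoo y x) {a, b, c, d} := by
  by_contra! hcon
  obtain ⟨p, hp, hmem⟩ := Set.not_disjoint_iff.1 hcon.1
  refine hcon.2 ?_
  have hca : s(x, y) ≠ s(c, a) := by rwa [Sym2.eq_swap (a := c)]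
  have hdb : s(x, y) ≠ s(d, b) := by rwa [Sym2.eq_swap (a := d)]
  rcases hmem with rfl | rfl | rfl | rfl
  · exact h.disjoint_cIoo_of_mem hxy hac hbd hp
  · convert h.rotate.disjoint_cIoo_of_mem hxy hbd hca hp using 1
    grind
  · convert h.rotate.rotate.disjoint_cIoo_of_mem hxy hca hdb hp using 1
    grind
  · convert h.rotate.rotate.rotate.disjoint_cIoo_of_mem hxy hdb hac hp using 1
    grind

variable [NeZero n]

theorem eq_add_one_of_disjoint_cIoo (h : IsOneCoreGraph G a b c d) {x y : Fin n}
    (hxy : G.Adj x y) (hac : s(x, y) ≠ s(a, c)) (hbd : s(x, y) ≠ s(b, d))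
    (hdisj : Disjoint (Set.cIoo x y) {a, b, c, d}) : y = x + 1 := by
  refine eq_add_one_of_cIoo_eq_empty hxy.ne (Set.not_nonempty_iff_eq_empty.1 fun hne => ?_)
  obtain ⟨v, hv, hleaf⟩ := exists_mem_subsingleton_neighborSet_of_isTree h.isTree hxy
    (Set.toFinite _) hne (sbtw_irrefl_left (b := y))
    fun v hv z => h.mem_cIoo_or_eq_or_eq hxy hac hbd hv
  exact Set.not_subsingleton_iff.2
    (h.nontrivial_neighborSet v (Set.disjoint_left.1 hdisj hv)) hleaf

theorem eq_add_one_or_eq_add_one (h : IsOneCoreGraph G a b c d) {x y : Fin n}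
    (hxy : G.Adj x y) (hac : s(x, y) ≠ s(a, c)) (hbd : s(x, y) ≠ s(b, d)) :
    y = x + 1 ∨ x = y + 1 := by
  refine (h.disjoint_cIoo_or hxy hac hbd).imp (h.eq_add_one_of_disjoint_cIoo hxy hac hbd) ?_
  rw [Sym2.eq_swap] at hac hbd
  exact h.eq_add_one_of_disjoint_cIoo hxy.symm hac hbd

theorem edgeSet_eq (h : IsOneCoreGraph G a b c d) :
    G.edgeSet = {s(a, c), s(b, d)} ∪ side '' {i | G.Adj i (i + 1)} := by
  ext e
  induction e with | _ x y
  simp only [SimpleGraph.mem_edgeSet, Set.mem_union, Set.mem_insert_iff, Set.mem_singleton_iff]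
  constructor
  · intro hxy
    rw [or_iff_not_imp_left, not_or]
    rintro ⟨hac, hbd⟩
    rcases h.eq_add_one_or_eq_add_one hxy hac hbd with rfl | rfl
    · exact ⟨x, hxy, rfl⟩
    · exact ⟨y, hxy.symm, Sym2.eq_swap⟩
  · rintro ((hac | hbd) | ⟨i, hi, hxy⟩)
    · exact (SimpleGraph.adj_congr_of_sym2 G hac).2 h.adj_ac
    · exact (SimpleGraph.adj_congr_of_sym2 G hbd).2 h.adj_bd
    · exact (SimpleGraph.adj_congr_of_sym2 G hxy).1 hi

theorem adj_add_one_and_adj_sub_one (h : IsOneCoreGraph G a b c d) {v : Fin n}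
    (hv : v ∉ ({a, b, c, d} : Set (Fin n))) : G.Adj v (v + 1) ∧ G.Adj (v - 1) v := by
  obtain ⟨w, hw, w', hw', hne⟩ := h.nontrivial_neighborSet v hv
  have eq_or_eq : ∀ w, G.Adj v w → w = v + 1 ∨ w = v - 1 := by
    intro w hw
    rw [eq_sub_iff_add_eq, eq_comm (a := w + 1)]
    exact h.eq_add_one_or_eq_add_one hw (by grind) (by grind)
  have := G.adj_comm (v - 1) v
  grind [SimpleGraph.mem_neighborSet]

theorem mem_of_not_adj_add_one (h : IsOneCoreGraph G a b c d) {i : Fin n}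
    (hi : ¬ G.Adj i (i + 1)) : i ∈ ({a, b, c, d} : Set (Fin n)) := by
  by_contra hmem
  exact hi (h.adj_add_one_and_adj_sub_one hmem).1

theorem add_one_eq_of_not_adj (h : IsOneCoreGraph G a b c d) (ha : ¬ G.Adj a (a + 1)) :
    a + 1 = b := by
  have hmem : a + 1 ∈ ({a, b, c, d} : Set (Fin n)) := by
    by_contra hmem
    simpa [ha] using (h.adj_add_one_and_adj_sub_one hmem).2
  rcases hmem with hself | hb | hc | hd
  · have hval := val_add_one_eq_ite a
    have := h.sbtw_abc
    simp only [hself, Fin.sbtw_iff] at *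
    split_ifs at hval <;> omega
  · exact hb
  · exact absurd (hc ▸ h.sbtw_abc) (not_sbtw_add_one a b)
  · exact absurd (hd ▸ h.sbtw_cda.cyclic_right) (not_sbtw_add_one a c)

theorem ncard_not_adj_add_one (h : IsOneCoreGraph G a b c d) :
    {i | ¬ G.Adj i (i + 1)}.ncard = 3 := by
  have hn : 3 ≤ n := by
    have := h.sbtw_abc
    simp only [Fin.sbtw_iff] at this
    omega
  have hne : s(a, c) ≠ s(b, d) := by
    have := h.sbtw_abc
    simp only [Fin.sbtw_iff, Sym2.eq_iff, ne_eq] at *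
    omega
  have hdisj : Disjoint {s(a, c), s(b, d)} (side '' {i | G.Adj i (i + 1)}) := by
    simp only [Set.disjoint_insert_left, Set.disjoint_singleton_left, Set.mem_image, not_exists,
      not_and]
    exact ⟨fun i _ hi => ne_side_of_sbtw h.sbtw_abc h.sbtw_cda i hi.symm,
      fun i _ hi => ne_side_of_sbtw h.rotate.sbtw_abc h.rotate.sbtw_cda i hi.symm⟩
  have hedges : G.edgeSet.ncard = 2 + {i | G.Adj i (i + 1)}.ncard := by
    rw [h.edgeSet_eq, Set.ncard_union_eq hdisj, Set.ncard_pair hne,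
      Set.ncard_image_of_injective _ (side_injective hn)]
  have htree := (SimpleGraph.isTree_iff_connected_and_card.1 h.isTree).2
  have hcompl := Set.ncard_add_ncard_compl {i | G.Adj i (i + 1)}
  rw [Nat.card_coe_set_eq, Nat.card_fin] at htree
  rw [Nat.card_fin, Set.compl_ofPred] at hcompl
  omega

theorem exists_mem_adj_add_one (h : IsOneCoreGraph G a b c d) :
    ∃ e ∈ ({a, b, c, d} : Set (Fin n)), G.Adj e (e + 1) := by
  by_contra! hnot
  have hcard : ({a, b, c, d} : Set (Fin n)).ncard = 4 := by
    have := h.sbtw_abc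
    have := h.sbtw_cda
    rw [Set.ncard_insert_of_notMem, Set.ncard_insert_of_notMem, Set.ncard_pair] <;>
      simp only [Fin.sbtw_iff, Set.mem_insert_iff, Set.mem_singleton_iff] at * <;> omega
  have hle := Set.ncard_le_ncard (t := {i | ¬ G.Adj i (i + 1)}) hnot
  rw [hcard, h.ncard_not_adj_add_one] at hle
  omega

theorem setOf_not_adj_add_one_eq (h : IsOneCoreGraph G a b c d) (hd : G.Adj d (d + 1)) :
    {i | ¬ G.Adj i (i + 1)} = {a, b, c} := by
  refine Set.eq_of_subset_of_ncard_le (fun i hi => ?_) ?_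
  · have hne : i ≠ d := fun hid => hi (hid ▸ hd)
    have hmem := h.mem_of_not_adj_add_one hi
    grind
  · rw [h.ncard_not_adj_add_one]
    simpa using (Set.ncard_coe_finset {a, b, c}).trans_le Finset.card_le_three

theorem exists_setOf_not_adj_add_one_eq (h : IsOneCoreGraph G a b c d) :
    ∃ a' b' c' d', IsOneCoreGraph G a' b' c' d' ∧ {i | ¬ G.Adj i (i + 1)} = {a', b', c'} := by
  obtain ⟨e, hmem, he⟩ := h.exists_mem_adj_add_one
  rcases hmem with rfl | rfl | rfl | rfl
  · exact ⟨b, c, d, e, h.rotate, h.rotate.setOf_not_adj_add_one_eq he⟩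
  · exact ⟨c, d, a, e, h.rotate.rotate, h.rotate.rotate.setOf_not_adj_add_one_eq he⟩
  · exact ⟨d, a, b, e, h.rotate.rotate.rotate, h.rotate.rotate.rotate.setOf_not_adj_add_one_eq he⟩
  · exact ⟨a, b, c, e, h, h.setOf_not_adj_add_one_eq he⟩

theorem exists_eq_pathLikeGraph (h : IsOneCoreGraph G a b c d) : ∃ t, G = pathLikeGraph t := by
  obtain ⟨a, b, c, d, h, hmiss⟩ := h.exists_setOf_not_adj_add_one_eq
  have not_adj : ∀ i ∈ ({a, b, c} : Set (Fin n)), ¬ G.Adj i (i + 1) := fun i hi => hmiss.ge hi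
  obtain rfl := h.add_one_eq_of_not_adj (not_adj a (by simp))
  obtain rfl := h.rotate.add_one_eq_of_not_adj (not_adj (a + 1) (by simp))
  obtain rfl := h.rotate.rotate.add_one_eq_of_not_adj (not_adj (a + 1 + 1) (by simp))
  refine ⟨a, ?_⟩
  rw [pathLikeGraph, ← hmiss, Set.compl_ofPred]
  simp only [not_not]
  rw [← h.edgeSet_eq, SimpleGraph.fromEdgeSet_edgeSet]

end IsOneCoreGraph

section Existence

variable {m : ℕ}

theorem mem_image_side_compl_iff {u v : Fin (m + 4)} :
    s(u, v) ∈ side '' {Fin.last (m + 3), 0, 1}ᶜ ↔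
      2 ≤ (u : ℕ) ∧ (v : ℕ) = u + 1 ∨ 2 ≤ (v : ℕ) ∧ (u : ℕ) = v + 1 := by
  simp only [side, Set.mem_image, Set.mem_compl_iff, Set.mem_insert_iff, Set.mem_singleton_iff,
    Sym2.eq_iff, Fin.ext_iff, val_add_one_eq_ite, Fin.val_last, Fin.val_zero, Fin.val_one]
  refine ⟨fun ⟨i, hi, hiuv⟩ => ?_, ?_⟩
  · split_ifs at hiuv <;> omega
  · rintro (h | h)
    · refine ⟨u, ?_⟩
      rw [if_neg (by omega)]
      omega
    · refine ⟨v, ?_⟩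
      rw [if_neg (by omega)]
      omega

/-- With `t = n - 1` the chord diagram is simplest: the side from `n - 1` to `0` is missing. -/
theorem pathLikeGraph_last_adj {u v : Fin (m + 4)} :
    (pathLikeGraph (Fin.last (m + 3))).Adj u v ↔
      ((u : ℕ) = 0 ∧ (v : ℕ) = 2 ∨ (u : ℕ) = 1 ∧ (v : ℕ) = m + 3 ∨
        2 ≤ (u : ℕ) ∧ (v : ℕ) = u + 1) ∨
      ((v : ℕ) = 0 ∧ (u : ℕ) = 2 ∨ (v : ℕ) = 1 ∧ (u : ℕ) = m + 3 ∨
        2 ≤ (v : ℕ) ∧ (u : ℕ) = v + 1) := by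
  have htwo : (((1 : Fin (m + 4)) + 1 : Fin (m + 4)) : ℕ) = 2 := val_add_one_eq_ite 1
  rw [pathLikeGraph, SimpleGraph.fromEdgeSet_adj, Fin.last_add_one, zero_add, Set.mem_union,
    mem_image_side_compl_iff]
  simp only [Set.mem_insert_iff, Set.mem_singleton_iff, Sym2.eq_iff, Fin.ext_iff, htwo, ne_eq,
    Fin.val_last, Fin.val_zero, Fin.val_one]
  omega

theorem comap_cycleIcc_pathLikeGraph_last :
    (pathLikeGraph (Fin.last (m + 3))).comap (Fin.cycleIcc 1 (Fin.last (m + 3))) =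
      SimpleGraph.pathGraph (m + 4) := by
  have hval : ∀ k : Fin (m + 4), (Fin.cycleIcc 1 (Fin.last (m + 3)) k : ℕ) =
      if (k : ℕ) = 0 then 0 else if (k : ℕ) = m + 3 then 1 else (k : ℕ) + 1 := by
    intro k
    obtain rfl | hk := eq_or_ne k 0
    · rw [Fin.cycleIcc_of_lt (by simp)]
      rfl
    · rw [Fin.cycleIcc_of_le_of_le (Fin.one_le_of_ne_zero hk) k.le_last, apply_ite Fin.val,
        val_add_one_eq_ite]
      simp only [Fin.ext_iff, Fin.val_last, Fin.val_zero, Fin.val_one, ne_eq] at *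
      split_ifs <;> omega
  ext u v
  have hu := hval u
  have hv := hval v
  rw [SimpleGraph.comap_adj, pathLikeGraph_last_adj, SimpleGraph.pathGraph_adj]
  split_ifs at hu hv <;> omega

theorem isTree_pathLikeGraph_last : (pathLikeGraph (Fin.last (m + 3))).IsTree := by
  refine (SimpleGraph.Iso.comap (Fin.cycleIcc 1 (Fin.last (m + 3))) _).isTree_iff.1 ?_
  rw [comap_cycleIcc_pathLikeGraph_last]
  exact isTree_pathGraph (m + 3)

theorem mem_chords_pathLikeGraph_last {p : Fin (m + 4) × Fin (m + 4)} :
    p ∈ chords (pathLikeGraph (Fin.last (m + 3))) ↔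
      (p.1 : ℕ) = 0 ∧ (p.2 : ℕ) = 2 ∨ (p.1 : ℕ) = 1 ∧ (p.2 : ℕ) = m + 3 ∨
        2 ≤ (p.1 : ℕ) ∧ (p.2 : ℕ) = p.1 + 1 := by
  rw [mem_chords, pathLikeGraph_last_adj, Fin.lt_def]
  omega

theorem crossNum_chords_pathLikeGraph_last :
    crossNum (chords (pathLikeGraph (Fin.last (m + 3)))) = 1 := by
  refine Finset.card_eq_one.2 ⟨((0, 2), (1, Fin.last (m + 3))), ?_⟩
  ext ⟨⟨x, y⟩, z, w⟩
  simp only [Finset.mem_filter, Finset.mem_product, mem_chords_pathLikeGraph_last, Interleaves,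
    Finset.mem_singleton, Prod.mk.injEq, Fin.ext_iff, Fin.lt_def, Fin.val_zero, Fin.val_one,
    Fin.val_two, Fin.val_last]
  omega

theorem nontrivial_neighborSet_pathLikeGraph_last {v : Fin (m + 4)} (hv : 2 ≤ (v : ℕ)) :
    ((pathLikeGraph (Fin.last (m + 3))).neighborSet v).Nontrivial := by
  obtain ⟨w, hw⟩ : ∃ w : Fin (m + 4), (v : ℕ) = 2 ∧ (w : ℕ) = 0 ∨ 2 < (v : ℕ) ∧ (v : ℕ) = w + 1 :=
    ⟨⟨if (v : ℕ) = 2 then 0 else v - 1, by split_ifs <;> omega⟩, by dsimp only; split_ifs <;> omega⟩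
  obtain ⟨w', hw'⟩ : ∃ w : Fin (m + 4),
      (v : ℕ) = m + 3 ∧ (w : ℕ) = 1 ∨ (v : ℕ) < m + 3 ∧ (w : ℕ) = v + 1 :=
    ⟨⟨if (v : ℕ) = m + 3 then 1 else v + 1, by split_ifs <;> omega⟩, by
      dsimp only; split_ifs <;> omega⟩
  refine ⟨w, ?_, w', ?_, ?_⟩ <;>
    simp only [SimpleGraph.mem_neighborSet, pathLikeGraph_last_adj, ne_eq, Fin.ext_iff] <;> omega

theorem isOneCoreTree_chords_pathLikeGraph_last :
    IsOneCoreTree (chords (pathLikeGraph (Fin.last (m + 3)))) := by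
  have val_le_one_of_degreeAt_eq_one : ∀ v : Fin (m + 4),
      degreeAt (chords (pathLikeGraph (Fin.last (m + 3)))) v = 1 → (v : ℕ) ≤ 1 := by
    intro v hv
    contrapose! hv
    rw [degreeAt_eq_ncard_neighborSet (isDiagram_chords _), diagGraph_chords, ne_eq,
      Set.ncard_eq_one]
    rintro ⟨w, hw⟩
    exact Set.not_nontrivial_singleton (hw ▸ nontrivial_neighborSet_pathLikeGraph_last hv)
  refine ⟨isDiagram_chords _, by rw [diagGraph_chords]; exact isTree_pathLikeGraph_last,
    crossNum_chords_pathLikeGraph_last, fun p hp hleaf => ?_⟩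
  have hcross : Interleaves ((0, 2) : Fin (m + 4) × Fin (m + 4)) (1, Fin.last (m + 3)) := by
    simp [Interleaves, Fin.lt_def, Nat.mod_eq_of_lt]
  have hle := hleaf.imp (val_le_one_of_degreeAt_eq_one _) (val_le_one_of_degreeAt_eq_one _)
  rw [mem_chords_pathLikeGraph_last] at hp
  rcases hp with h | h | h
  · obtain rfl : p = (0, 2) := Prod.ext (Fin.ext h.1) (Fin.ext h.2)
    exact ⟨(1, Fin.last (m + 3)), mem_chords_pathLikeGraph_last.2 (by simp), Or.inl hcross⟩
  · obtain rfl : p = (1, Fin.last (m + 3)) := Prod.ext (Fin.ext h.1) (Fin.ext h.2)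
    exact ⟨(0, 2), mem_chords_pathLikeGraph_last.2 (by simp), Or.inr hcross⟩
  · omega

end Existence

namespace IsOneCoreTree

variable {n : ℕ} [NeZero n]

theorem exists_eq_chords_pathLikeGraph {D : Finset (Fin n × Fin n)} (h : IsOneCoreTree D) :
    ∃ t, D = chords (pathLikeGraph t) := by
  obtain ⟨a, b, c, d, hcore⟩ := h.exists_isOneCoreGraph
  obtain ⟨t, ht⟩ := hcore.exists_eq_pathLikeGraph
  exact ⟨t, by rw [← ht, chords_diagGraph h.1]⟩

end IsOneCoreTree

/-- For each `n ≥ 4` there is, up to rotation, exactly one `1`-core tree on `n`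
vertices of a circle: `1`-core trees on `n` points exist, and any two of them
differ by a rotation of the circle. (Equivalently, the generating function of
`1`-core trees is `G(x) = Σ_{n ≥ 4} xⁿ = x⁴/(1−x)`.) -/
theorem oneCoreTree_exists_unique_up_to_rotation (n : ℕ) (hn : 4 ≤ n) :
    (∃ D : Finset (Fin n × Fin n), IsOneCoreTree D) ∧
    ∀ D₁ D₂ : Finset (Fin n × Fin n), IsOneCoreTree D₁ → IsOneCoreTree D₂ →
      ∃ c : Fin n, D₂ = D₁.image (rotPair c) := by
  obtain ⟨m, rfl⟩ := Nat.exists_eq_add_of_le' hn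
  refine ⟨⟨_, isOneCoreTree_chords_pathLikeGraph_last⟩, fun D₁ D₂ h₁ h₂ => ?_⟩
  obtain ⟨t₁, rfl⟩ := h₁.exists_eq_chords_pathLikeGraph
  obtain ⟨t₂, rfl⟩ := h₂.exists_eq_chords_pathLikeGraph
  exact ⟨t₂ - t₁, chords_pathLikeGraph_eq_image_rotPair t₁ t₂⟩
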